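/- arXiv:0911.0445 — 7 statements merged into one kernel-verified Lean document; each statement's English description precedes it below -/
import Mathlib

section
/- Let n ≥ 1 and let G be a subgroup of S_n. Then the semigroup ⟨G,a⟩ is regular for every singular transformation a ∈ T_n∖S_n if and only if G has the universal transversal property. -/
open Finset

/-- Transformations of a set `α`, composed left-to-right (acting on the right):
`x (a * b) = (x a) b`. -/
structure Transf (α : Type*) where
  toFun : α → α

namespace Transf

variable {α : Type*}

instance : Semigroup (Transf α) where
  mul a b := ⟨fun x => b.toFun (a.toFun x)⟩
  mul_assoc _ _ _ := rfl

/-- The transformation induced by a permutation. -/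
def ofPerm (g : Equiv.Perm α) : Transf α := ⟨g⟩

/-- The rank of a transformation: the cardinality of its image. -/
noncomputable def rank (a : Transf α) : ℕ := Set.ncard (Set.range a.toFun)

end Transf

/-- The subsemigroup `⟨G, a⟩` generated by `G ∪ {a}`. -/
def genGA {α : Type*} (G : Subgroup (Equiv.Perm α)) (a : Transf α) :
    Subsemigroup (Transf α) :=
  Subsemigroup.closure (insert a (Transf.ofPerm '' (G : Set (Equiv.Perm α))))

/-- The set `⟨G, a⟩ ∖ G`. -/
def genGAminusG {α : Type*} (G : Subgroup (Equiv.Perm α)) (a : Transf α) :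
    Set (Transf α) :=
  (genGA G a : Set (Transf α)) \ (Transf.ofPerm '' (G : Set (Equiv.Perm α)))

/-- The set of conjugates `a^g = g⁻¹ a g` with `g ∈ G`. -/
def conjSet {α : Type*} (G : Subgroup (Equiv.Perm α)) (a : Transf α) : Set (Transf α) :=
  (fun g : Equiv.Perm α => Transf.ofPerm g⁻¹ * a * Transf.ofPerm g) '' (G : Set (Equiv.Perm α))

/-- The subsemigroup `⟨a^g | g ∈ G⟩`. -/
def genConj {α : Type*} (G : Subgroup (Equiv.Perm α)) (a : Transf α) :
    Subsemigroup (Transf α) :=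
  Subsemigroup.closure (conjSet G a)

/-- A subset of the transformation semigroup is regular if every element `u` of it
admits `v` in the set with `u = u v u`. -/
def IsRegularSet {α : Type*} (S : Set (Transf α)) : Prop :=
  ∀ u ∈ S, ∃ v ∈ S, u * v * u = u

/-- A subset of the transformation semigroup is idempotent generated if it coincides with
the subsemigroup generated by its idempotent elements. -/
def IsIdemGen {α : Type*} (S : Set (Transf α)) : Prop :=
  S = ↑(Subsemigroup.closure {u | u ∈ S ∧ u * u = u})

/-- `T` is a transversal for the partition `P`: it meets each class in exactly one point. -/
def IsTransversal {α : Type*} [DecidableEq α] [Fintype α] (T : Finset α)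
    (P : Finpartition (Finset.univ : Finset α)) : Prop :=
  ∀ p ∈ P.parts, (T ∩ p).card = 1

/-- The universal transversal property: for every subset `I` and every partition `P`
with exactly `|I|` classes, some `G`-translate of `I` is a transversal for `P`. -/
def HasUTP {α : Type*} [DecidableEq α] [Fintype α] (G : Subgroup (Equiv.Perm α)) : Prop :=
  ∀ (I : Finset α) (P : Finpartition (Finset.univ : Finset α)),
    P.parts.card = I.card → ∃ g ∈ G, IsTransversal (I.image ⇑g) P

/-!
The universal transversal property says that every map `f` admits some `g ∈ G` for which `g f`
permutes the image of `f`: subsets and partitions of equal size are exactly the images and kernels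
of maps.

If `g ∈ G` and `g u` permutes the image of `u`, then some power `(g u)^(k+1)` fixes that image
pointwise, and `v = (g u)^k g` satisfies `u v u = u`. Conversely, let `a v a = a` with
`v ∈ ⟨G, a⟩`, so that `v a` fixes the image of `a` pointwise. Reading `v` up to the first occurrence
of `a`, either `v = g` or `v = g a w` with `g ∈ G`; hence `g a` is injective on the image of `a`.
-/

section SetFunctions

variable {α β : Type*}

lemma bijOn_range_iff_existsUnique {f : α → β} {s : Set α} :
    Set.BijOn f s (Set.range f) ↔ ∀ x, ∃! y, y ∈ s ∧ f y = f x := by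
  constructor
  · rintro ⟨-, hinj, hsurj⟩ x
    obtain ⟨y, hy, hyx⟩ := hsurj ⟨x, rfl⟩
    exact ⟨y, ⟨hy, hyx⟩, fun z hz => hinj hz.1 hy (hz.2.trans hyx.symm)⟩
  · refine fun h => ⟨fun x _ => ⟨x, rfl⟩, fun x hx y hy hxy => ?_, ?_⟩
    · exact (h y).unique ⟨hx, hxy⟩ ⟨hy, rfl⟩
    · rintro _ ⟨x, rfl⟩
      exact (h x).exists

lemma ncard_range_eq_of_ker_eq {γ : Type*} {f : α → β} {g : α → γ}
    (h : Setoid.ker f = Setoid.ker g) : (Set.range f).ncard = (Set.range g).ncard := by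
  rw [← Nat.card_coe_set_eq, ← Nat.card_coe_set_eq,
    ← Nat.card_congr (Setoid.quotientKerEquivRange f), h,
    Nat.card_congr (Setoid.quotientKerEquivRange g)]

lemma exists_iterate_succ_eqOn_id_of_bijOn {f : α → α} {s : Set α} (hf : Set.BijOn f s s)
    (hs : s.Finite) : ∃ k, Set.EqOn f^[k + 1] id s := by
  have := hs.to_subtype
  let e : Equiv.Perm s := hf.equiv f
  obtain ⟨k, hk⟩ := Nat.exists_eq_succ_of_ne_zero (orderOf_pos e).ne'
  have he : e^[k + 1] = id := by
    rw [Equiv.Perm.iterate_eq_pow, ← Nat.succ_eq_add_one, ← hk, pow_orderOf_eq_one,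
      Equiv.Perm.coe_one]
  refine ⟨k, fun x hx => ?_⟩
  calc f^[k + 1] x = (e^[k + 1] ⟨x, hx⟩ : s) := (hf.mapsTo.coe_iterate_restrict ⟨x, hx⟩ _).symm
    _ = x := by rw [he, id]

end SetFunctions

section KernelPartitions

variable {α β : Type*} [DecidableEq α] [Fintype α] {P : Finpartition (univ : Finset α)}
  {f : α → β}

variable (P) in
lemma range_part : Set.range P.part = P.parts := by
  refine Set.Subset.antisymm ?_ ?_
  · rintro _ ⟨x, rfl⟩
    exact P.part_mem.2 (mem_univ x)
  · exact P.part_surjOn.subset_range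

lemma card_parts_eq_ncard_range (h : Setoid.ker P.part = Setoid.ker f) :
    P.parts.card = (Set.range f).ncard := by
  rw [← ncard_range_eq_of_ker_eq h, range_part, Set.ncard_coe_finset]

lemma isTransversal_iff_bijOn_range (h : Setoid.ker P.part = Setoid.ker f) {T : Finset α} :
    IsTransversal T P ↔ Set.BijOn f T (Set.range f) := by
  have hmem (x y : α) : y ∈ P.part x ↔ f y = f x := by
    rw [P.mem_part_iff_part_eq_part (mem_univ y) (mem_univ x)]
    exact Setoid.ext_iff.1 h y x
  simp_rw [bijOn_range_iff_existsUnique, IsTransversal, card_eq_one_iff_existsUnique, mem_inter,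
    ← mem_coe (s := P.parts), ← range_part, Set.forall_mem_range, hmem, mem_coe]

lemma exists_ker_part_eq_ker (f : α → β) :
    ∃ P : Finpartition (univ : Finset α), Setoid.ker P.part = Setoid.ker f := by
  classical
  refine ⟨Finpartition.ofSetoid (Setoid.ker f), Setoid.ext fun x y => ?_⟩
  rw [Setoid.ker_def, ← Finpartition.mem_part_iff_part_eq_part _ (mem_univ x) (mem_univ y),
    Finpartition.mem_part_ofSetoid_iff_rel, Setoid.comm']

lemma exists_ker_eq_and_range_eq {I : Finset β} (h : P.parts.card = I.card) :
    ∃ f : α → β, Setoid.ker P.part = Setoid.ker f ∧ Set.range f = I := by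
  let e : P.parts ≃ I := equivOfCardEq h
  let c : α → P.parts := fun x => ⟨P.part x, P.part_mem.2 (mem_univ x)⟩
  have hc : Function.Surjective c := fun ⟨p, hp⟩ =>
    (P.part_surjOn hp).imp fun _ hx => Subtype.ext hx.2
  refine ⟨fun x => e (c x), Setoid.ext fun x y => ?_, ?_⟩
  · simp only [Setoid.ker_def, Subtype.coe_inj, e.injective.eq_iff, c, Subtype.mk.injEq]
  · exact ((e.surjective.comp hc).range_comp Subtype.val).trans Subtype.range_coe

end KernelPartitions

section UniversalTransversal

variable {α : Type*} [DecidableEq α] [Fintype α]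

lemma isTransversal_image_iff_bijOn {P : Finpartition (univ : Finset α)} {I : Finset α}
    {f : α → α} (hker : Setoid.ker P.part = Setoid.ker f) (hrange : Set.range f = I)
    (g : Equiv.Perm α) :
    IsTransversal (I.image g) P ↔ Set.BijOn (f ∘ g) (Set.range f) (Set.range f) := by
  rw [isTransversal_iff_bijOn_range hker, coe_image, ← hrange,
    Set.bijOn_comp_iff g.injective.injOn]

lemma hasUTP_iff_forall_exists_bijOn {G : Subgroup (Equiv.Perm α)} :
    HasUTP G ↔ ∀ f : α → α, ∃ g ∈ G, Set.BijOn (f ∘ g) (Set.range f) (Set.range f) := by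
  constructor
  · intro hG f
    obtain ⟨P, hker⟩ := exists_ker_part_eq_ker f
    have hrange : Set.range f = (univ.image f : Finset α) := by simp
    have hcard : P.parts.card = (univ.image f).card := by
      rw [card_parts_eq_ncard_range hker, hrange, Set.ncard_coe_finset]
    obtain ⟨g, hg, hT⟩ := hG _ P hcard
    exact ⟨g, hg, (isTransversal_image_iff_bijOn hker hrange g).1 hT⟩
  · intro h I P hcard
    obtain ⟨f, hker, hrange⟩ := exists_ker_eq_and_range_eq hcard
    obtain ⟨g, hg, hbij⟩ := h f
    exact ⟨g, hg, (isTransversal_image_iff_bijOn hker hrange g).2 hbij⟩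

end UniversalTransversal

namespace Transf

variable {α : Type*}

@[ext]
lemma ext {a b : Transf α} (h : ∀ x, a.toFun x = b.toFun x) : a = b :=
  congrArg mk (funext h)

lemma mul_mul_eq_self_iff {a v : Transf α} :
    a * v * a = a ↔ Set.EqOn (a.toFun ∘ v.toFun) id (Set.range a.toFun) := by
  rw [Set.EqOn, Set.forall_mem_range, Transf.ext_iff]
  rfl

end Transf

section Regularity

variable {α : Type*} {G : Subgroup (Equiv.Perm α)} {a v : Transf α}

lemma comp_iterate_mem {S : Subsemigroup (Transf α)} {u s : Transf α} (hu : u ∈ S) (hs : s ∈ S)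
    (k : ℕ) : (⟨s.toFun ∘ (u.toFun ∘ s.toFun)^[k]⟩ : Transf α) ∈ S := by
  induction k with
  | zero => exact hs
  | succ k ih =>
    rw [Function.iterate_succ']
    exact S.mul_mem (S.mul_mem ih hu) hs

lemma exists_mul_mul_eq_self_of_bijOn {S : Subsemigroup (Transf α)} {u s : Transf α}
    (hu : u ∈ S) (hs : s ∈ S) (hfin : (Set.range u.toFun).Finite)
    (hbij : Set.BijOn (u.toFun ∘ s.toFun) (Set.range u.toFun) (Set.range u.toFun)) :
    ∃ v ∈ S, u * v * u = u := by
  obtain ⟨k, hk⟩ := exists_iterate_succ_eqOn_id_of_bijOn hbij hfin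
  refine ⟨_, comp_iterate_mem hu hs k, Transf.mul_mul_eq_self_iff.2 ?_⟩
  rwa [Function.iterate_succ'] at hk

variable (a) in
lemma ofPerm_mem_genGA {g : Equiv.Perm α} (hg : g ∈ G) :
    Transf.ofPerm g ∈ genGA G a :=
  Subsemigroup.subset_closure (Or.inr ⟨g, hg, rfl⟩)

variable (G a) in
lemma self_mem_genGA : a ∈ genGA G a :=
  Subsemigroup.subset_closure (Or.inl rfl)

lemma eq_ofPerm_or_eq_mul_of_mem_genGA (hv : v ∈ genGA G a) :
    ∃ g ∈ G, v = Transf.ofPerm g ∨ ∃ w, v = Transf.ofPerm g * a * w := by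
  induction hv using Subsemigroup.closure_induction with
  | mem x hx =>
    rcases hx with rfl | ⟨g, hg, rfl⟩
    · exact ⟨1, G.one_mem, Or.inr ⟨Transf.ofPerm 1, rfl⟩⟩
    · exact ⟨g, hg, Or.inl rfl⟩
  | mul x y _ _ hx hy =>
    obtain ⟨g, hg, rfl | ⟨w, rfl⟩⟩ := hx
    · obtain ⟨h, hh, rfl | ⟨w, rfl⟩⟩ := hy
      · exact ⟨h * g, G.mul_mem hh hg, Or.inl rfl⟩
      · exact ⟨h * g, G.mul_mem hh hg, Or.inr ⟨w, rfl⟩⟩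
    · exact ⟨g, hg, Or.inr ⟨w * y, rfl⟩⟩

lemma exists_bijOn_of_mul_mul_eq_self (hv : v ∈ genGA G a) (hava : a * v * a = a)
    (hfin : (Set.range a.toFun).Finite) :
    ∃ g ∈ G, Set.BijOn (a.toFun ∘ g) (Set.range a.toFun) (Set.range a.toFun) := by
  have hinj : Set.InjOn (a.toFun ∘ v.toFun) (Set.range a.toFun) :=
    (Transf.mul_mul_eq_self_iff.1 hava).injOn_iff.2 (Set.injOn_id _)
  obtain ⟨g, hg, hvg⟩ := eq_ofPerm_or_eq_mul_of_mem_genGA hv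
  have hmaps : Set.MapsTo (a.toFun ∘ g) (Set.range a.toFun) (Set.range a.toFun) :=
    fun x _ => ⟨g x, rfl⟩
  refine ⟨g, hg, (hfin.injOn_iff_bijOn_of_mapsTo hmaps).1 ?_⟩
  obtain rfl | ⟨w, rfl⟩ := hvg
  · exact hinj
  · exact Set.InjOn.of_comp (g := a.toFun ∘ w.toFun) hinj

end Regularity

theorem stmt0_general {α : Type*} [DecidableEq α] [Fintype α] (G : Subgroup (Equiv.Perm α)) :
    (∀ a : Transf α, ¬ Function.Bijective a.toFun →
      IsRegularSet (genGA G a : Set (Transf α))) ↔ HasUTP G := by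
  rw [hasUTP_iff_forall_exists_bijOn]
  constructor
  · intro hreg f
    by_cases hf : Function.Bijective f
    · refine ⟨1, G.one_mem, ?_⟩
      rwa [Equiv.Perm.coe_one, Function.comp_id, hf.surjective.range_eq, Set.bijOn_univ]
    · obtain ⟨v, hv, hava⟩ := hreg ⟨f⟩ hf ⟨f⟩ (self_mem_genGA G ⟨f⟩)
      exact exists_bijOn_of_mul_mul_eq_self hv hava (Set.toFinite _)
  · intro hG a _ u hu
    obtain ⟨g, hg, hbij⟩ := hG u.toFun
    exact exists_mul_mul_eq_self_of_bijOn hu (ofPerm_mem_genGA a hg) (Set.toFinite _) hbij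

theorem stmt0 (n : ℕ) (hn : 1 ≤ n) (G : Subgroup (Equiv.Perm (Fin n))) :
    (∀ a : Transf (Fin n), ¬ Function.Bijective a.toFun →
      IsRegularSet (genGA G a : Set (Transf (Fin n)))) ↔ HasUTP G :=
  stmt0_general G
end

section
/- Let n ≥ 1, let a ∈ T_n∖S_n be a singular transformation, and let G be a subgroup of S_n. Then the semigroups ⟨G,a⟩∖G and ⟨a^g | g ∈ G⟩ have exactly the same set of idempotent elements. -/
/-!
If `h` normalizes a subsemigroup `C` of a monoid, then copies of `h` can be collected on the right:
`(s * h) ^ k = t * h ^ k` with `t ∈ C` for every `s ∈ C` and `k ≥ 1`. An idempotent `s * h` equals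
all its powers, so when `h` has finite order it already lies in `C`. Every element of `⟨G, a⟩ ∖ G`
is such a product, with `C = ⟨a ^ g | g ∈ G⟩`. Conversely, a product of conjugates of `a` that is
invertible makes its first factor right invertible and its last factor left invertible, hence `a`
invertible; so `⟨a ^ g | g ∈ G⟩` misses `G` when `a` is singular.
-/

open Finset

section Monoid

variable {M Γ : Type*} [Monoid M] [Group Γ]

lemma exists_mem_mul_pow_succ_eq {C : Subsemigroup M} {h s : M}
    (hC : ∀ t ∈ C, ∃ t' ∈ C, h * t = t' * h) (hs : s ∈ C) (k : ℕ) :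
    ∃ t ∈ C, (s * h) ^ (k + 1) = t * h ^ (k + 1) := by
  induction k with
  | zero => exact ⟨s, hs, by simp only [zero_add, pow_one]⟩
  | succ k ih =>
    obtain ⟨t, ht, hpow⟩ := ih
    obtain ⟨t', ht', hcomm⟩ := hC t ht
    refine ⟨s * t', mul_mem hs ht', ?_⟩
    calc (s * h) ^ (k + 1 + 1) = s * (h * t) * h ^ (k + 1) := by
          rw [pow_succ', hpow]; simp only [mul_assoc]
      _ = s * t' * h ^ (k + 1 + 1) := by rw [hcomm, pow_succ' h (k + 1)]; simp only [mul_assoc]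

lemma mul_mem_of_isIdempotentElem_of_isOfFinOrder {C : Subsemigroup M} {h s : M}
    (hC : ∀ t ∈ C, ∃ t' ∈ C, h * t = t' * h) (hs : s ∈ C) (hidem : IsIdempotentElem (s * h))
    (hh : IsOfFinOrder h) : s * h ∈ C := by
  obtain ⟨k, hk⟩ := Nat.exists_eq_add_one.mpr hh.orderOf_pos
  obtain ⟨t, ht, hpow⟩ := exists_mem_mul_pow_succ_eq hC hs k
  rw [hidem.pow_succ_eq, ← hk, pow_orderOf_eq_one, mul_one] at hpow
  exact hpow ▸ ht

/-- The subsemigroup `⟨a ^ g | g ∈ Γ⟩` generated by the conjugates of an element `a` of a monoid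
under a group `Γ`, which is mapped to the monoid by `φ` instead of being a subset of it. -/
def conjClosure (φ : Γ →* M) (a : M) : Subsemigroup M :=
  Subsemigroup.closure (Set.range fun g => φ g⁻¹ * a * φ g)

variable (φ : Γ →* M) {a u : M}

lemma conj_mem_conjClosure (a : M) (g : Γ) : φ g⁻¹ * a * φ g ∈ conjClosure φ a :=
  Subsemigroup.subset_closure ⟨g, rfl⟩

lemma self_mem_conjClosure (a : M) : a ∈ conjClosure φ a := by
  simpa using conj_mem_conjClosure φ a 1

lemma exists_mem_conjClosure_map_mul_eq (g : Γ) (hu : u ∈ conjClosure φ a) :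
    ∃ v ∈ conjClosure φ a, φ g * u = v * φ g := by
  induction hu using Subsemigroup.closure_induction with
  | mem u hu =>
    obtain ⟨h, rfl⟩ := hu
    have hcancel : φ (h * g⁻¹) * φ g = φ h := by rw [← map_mul, inv_mul_cancel_right]
    refine ⟨_, conj_mem_conjClosure φ a (h * g⁻¹), ?_⟩
    rw [mul_assoc _ _ (φ g), hcancel, mul_inv_rev, inv_inv, map_mul]
    simp only [mul_assoc]
  | mul u v _ _ ihu ihv =>
    obtain ⟨u', hu', hcomm_u⟩ := ihu
    obtain ⟨v', hv', hcomm_v⟩ := ihv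
    exact ⟨u' * v', mul_mem hu' hv', by
      rw [← mul_assoc, hcomm_u, mul_assoc, hcomm_v, mul_assoc]⟩

lemma mem_range_or_exists_mul_map_eq (hu : u ∈ Subsemigroup.closure (insert a (Set.range φ))) :
    u ∈ Set.range φ ∨ ∃ s ∈ conjClosure φ a, ∃ g, s * φ g = u := by
  induction hu using Subsemigroup.closure_induction with
  | mem u hu =>
    rcases hu with rfl | hu
    · exact .inr ⟨u, self_mem_conjClosure φ u, 1, by rw [map_one, mul_one]⟩
    · exact .inl hu
  | mul u v _ _ ihu ihv =>
    rcases ihu with ⟨g, rfl⟩ | ⟨s, hs, g, rfl⟩ <;> rcases ihv with ⟨h, rfl⟩ | ⟨t, ht, h, rfl⟩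
    · exact .inl ⟨g * h, map_mul φ g h⟩
    · obtain ⟨t', ht', hcomm⟩ := exists_mem_conjClosure_map_mul_eq φ g ht
      exact .inr ⟨t', ht', g * h, by rw [map_mul, ← mul_assoc, ← hcomm, mul_assoc]⟩
    · exact .inr ⟨s, hs, g * h, by rw [map_mul, mul_assoc]⟩
    · obtain ⟨t', ht', hcomm⟩ := exists_mem_conjClosure_map_mul_eq φ g ht
      refine .inr ⟨s * t', mul_mem hs ht', g * h, ?_⟩
      calc s * t' * φ (g * h) = s * (t' * φ g) * φ h := by rw [map_mul]; simp only [mul_assoc]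
        _ = s * φ g * (t * φ h) := by rw [← hcomm]; simp only [mul_assoc]

lemma conjClosure_le_closure_insert_range (a : M) :
    conjClosure φ a ≤ Subsemigroup.closure (insert a (Set.range φ)) := by
  refine Subsemigroup.closure_le.mpr ?_
  rintro _ ⟨g, rfl⟩
  have map_mem (h : Γ) : φ h ∈ Subsemigroup.closure (insert a (Set.range φ)) :=
    Subsemigroup.subset_closure (.inr ⟨h, rfl⟩)
  exact mul_mem (mul_mem (map_mem _) (Subsemigroup.subset_closure (.inl rfl))) (map_mem g)

lemma exists_map_mul_eq_mul (hu : u ∈ conjClosure φ a) : ∃ g v, φ g * u = a * v := by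
  induction hu using Subsemigroup.closure_induction with
  | mem u hu =>
    obtain ⟨g, rfl⟩ := hu
    exact ⟨g, φ g, by simp [← mul_assoc, ← map_mul]⟩
  | mul u w _ _ ihu _ =>
    obtain ⟨g, v, hgu⟩ := ihu
    exact ⟨g, v * w, by rw [← mul_assoc, hgu, mul_assoc]⟩

lemma exists_mul_map_eq_mul (hu : u ∈ conjClosure φ a) : ∃ g v, u * φ g = v * a := by
  induction hu using Subsemigroup.closure_induction with
  | mem u hu =>
    obtain ⟨g, rfl⟩ := hu
    exact ⟨g⁻¹, φ g⁻¹, by simp [mul_assoc, ← map_mul]⟩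
  | mul w u _ _ _ ihu =>
    obtain ⟨g, v, hug⟩ := ihu
    exact ⟨g, w * v, by rw [mul_assoc, hug, mul_assoc]⟩

lemma isUnit_of_isUnit_mem_conjClosure (hu : u ∈ conjClosure φ a) (hunit : IsUnit u) :
    IsUnit a := by
  obtain ⟨g, v, hgu⟩ := exists_map_mul_eq_mul φ hu
  obtain ⟨h, w, huh⟩ := exists_mul_map_eq_mul φ hu
  have hav : IsUnit (a * v) := hgu ▸ ((Group.isUnit g).map φ).mul hunit
  have hwa : IsUnit (w * a) := huh ▸ hunit.mul ((Group.isUnit h).map φ)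
  obtain ⟨x, hx⟩ := hav.exists_right_inv
  obtain ⟨y, hy⟩ := hwa.exists_left_inv
  exact isUnit_iff_exists_and_exists.mpr
    ⟨⟨v * x, by rw [← mul_assoc, hx]⟩, ⟨y * w, by rw [mul_assoc, hy]⟩⟩

theorem idempotents_closure_diff_range_eq (hφ : ∀ g, IsOfFinOrder (φ g)) (ha : ¬ IsUnit a) :
    {u | u ∈ (Subsemigroup.closure (insert a (Set.range φ)) : Set M) \ Set.range φ ∧
      IsIdempotentElem u} = {u | u ∈ conjClosure φ a ∧ IsIdempotentElem u} := by
  ext u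
  refine and_congr_left fun hidem => ⟨?_, fun hu => ?_⟩
  · rintro ⟨hu, hrange⟩
    obtain ⟨s, hs, g, rfl⟩ := (mem_range_or_exists_mul_map_eq φ hu).resolve_left hrange
    exact mul_mem_of_isIdempotentElem_of_isOfFinOrder
      (fun _ => exists_mem_conjClosure_map_mul_eq φ g) hs hidem (hφ g)
  · refine ⟨conjClosure_le_closure_insert_range φ a hu, ?_⟩
    rintro ⟨g, rfl⟩
    exact ha (isUnit_of_isUnit_mem_conjClosure φ hu ((Group.isUnit g).map φ))

end Monoid

namespace Transf

variable {α : Type*}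

-- Scoped, so that `*` in statements outside this namespace is still found through `Semigroup`.
scoped instance : Monoid (Transf α) where
  one := ⟨id⟩
  one_mul _ := rfl
  mul_one _ := rfl

lemma isUnit_iff_bijective {a : Transf α} : IsUnit a ↔ Function.Bijective a.toFun := by
  rw [isUnit_iff_exists, Function.bijective_iff_has_inverse]
  constructor
  · rintro ⟨b, hab, hba⟩
    exact ⟨b.toFun, congrFun (congrArg toFun hab), congrFun (congrArg toFun hba)⟩
  · rintro ⟨b, hleft, hright⟩
    exact ⟨⟨b⟩, congrArg mk (funext hleft), congrArg mk (funext hright)⟩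

/-- The inclusion of a permutation group into the transformation monoid. The group is replaced by
its opposite because permutations compose right-to-left and transformations left-to-right. -/
def ofPermHom (G : Subgroup (Equiv.Perm α)) : Gᵐᵒᵖ →* Transf α where
  toFun g := ofPerm g.unop
  map_one' := rfl
  map_mul' _ _ := rfl

lemma range_ofPermHom (G : Subgroup (Equiv.Perm α)) :
    Set.range (ofPermHom G) = ofPerm '' (G : Set (Equiv.Perm α)) := by
  ext u
  constructor
  · rintro ⟨g, rfl⟩
    exact ⟨g.unop, g.unop.2, rfl⟩
  · rintro ⟨g, hg, rfl⟩
    exact ⟨.op ⟨g, hg⟩, rfl⟩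

lemma conjClosure_ofPermHom (G : Subgroup (Equiv.Perm α)) (a : Transf α) :
    conjClosure (ofPermHom G) a = genConj G a := by
  refine congrArg Subsemigroup.closure (Set.ext fun u => ⟨?_, ?_⟩)
  · rintro ⟨g, rfl⟩
    exact ⟨g.unop, g.unop.2, rfl⟩
  · rintro ⟨g, hg, rfl⟩
    exact ⟨.op ⟨g, hg⟩, rfl⟩

lemma isOfFinOrder_ofPermHom {G : Subgroup (Equiv.Perm α)} (hG : IsMulTorsion G) (g : Gᵐᵒᵖ) :
    IsOfFinOrder (ofPermHom G g) := by
  obtain ⟨k, hk, hpow⟩ := (hG g.unop).exists_pow_eq_one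
  have hpow_op : g ^ k = 1 := MulOpposite.unop_injective hpow
  exact (ofPermHom G).isOfFinOrder (isOfFinOrder_iff_pow_eq_one.mpr ⟨k, hk, hpow_op⟩)

end Transf

theorem stmt6_general {α : Type*} {a : Transf α} (ha : ¬ Function.Bijective a.toFun)
    {G : Subgroup (Equiv.Perm α)} (hG : IsMulTorsion G) :
    {u | u ∈ genGAminusG G a ∧ u * u = u} =
      {u | u ∈ (genConj G a : Set (Transf α)) ∧ u * u = u} := by
  rw [genGAminusG, genGA, ← Transf.range_ofPermHom, ← Transf.conjClosure_ofPermHom]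
  open scoped Transf in
  exact idempotents_closure_diff_range_eq (Transf.ofPermHom G)
    (Transf.isOfFinOrder_ofPermHom hG) (mt Transf.isUnit_iff_bijective.mp ha)

theorem stmt6 (n : ℕ) (hn : 1 ≤ n) (a : Transf (Fin n))
    (ha : ¬ Function.Bijective a.toFun) (G : Subgroup (Equiv.Perm (Fin n))) :
    {u | u ∈ genGAminusG G a ∧ u * u = u} =
      {u | u ∈ (genConj G a : Set (Transf (Fin n))) ∧ u * u = u} := by
  exact stmt6_general ha isOfFinOrder_of_finite
end

section
/- Let n ≥ 1 and let G be a subgroup of S_n. If the semigroup ⟨G,a⟩∖G is idempotent generated for every singular transformation a ∈ T_n∖S_n, then G has the universal transversal property. -/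
/-!
Let `a` have kernel `P` and image `I`. If `a` is singular, it is a product of idempotents of
`⟨G, a⟩ ∖ G`, whose first factor `e` satisfies `e a = a`. Hence `e` maps every class of `P` into
itself. On the other hand `e` is a product involving `a`, so its image lies in `I g`, where `g ∈ G`
is the product of the permutations after the last occurrence of `a`. Thus `I g` meets every class
of `P`, and as it has as many points as there are classes, it meets each of them exactly once. If
`a` is a permutation, take `e = 1` and `g = 1` instead.
-/

open Finset

lemma sum_card_inter_parts {α : Type*} [DecidableEq α] {s t : Finset α} (P : Finpartition s)
    (hts : t ⊆ s) : ∑ p ∈ P.parts, #(t ∩ p) = #t := by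
  have hmaps : Set.MapsTo P.part t P.parts := fun x hx => P.part_mem.2 (hts hx)
  rw [card_eq_sum_card_fiberwise hmaps]
  refine sum_congr rfl fun p hp => congrArg card ?_
  ext x
  simp only [mem_inter, mem_filter]
  exact and_congr_right fun _ => (P.part_eq_iff_mem hp).symm

lemma isTransversal_of_inter_nonempty {α : Type*} [DecidableEq α] [Fintype α] {T : Finset α}
    {P : Finpartition (univ : Finset α)} (hcard : #P.parts = #T)
    (hT : ∀ p ∈ P.parts, (T ∩ p).Nonempty) : IsTransversal T P := by
  have hsum : ∑ _p ∈ P.parts, 1 = ∑ p ∈ P.parts, #(T ∩ p) := by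
    rw [sum_card_inter_parts P (subset_univ T), ← card_eq_sum_ones, hcard]
  have heq := (sum_eq_sum_iff_of_le fun p hp => (hT p hp).card_pos).1 hsum
  exact fun p hp => (heq p hp).symm

lemma exists_mul_eq_self_of_mem_closure {M : Type*} [Semigroup M] {s : Set M}
    (hs : ∀ u ∈ s, IsIdempotentElem u) {v : M} (hv : v ∈ Subsemigroup.closure s) :
    ∃ e ∈ s, e * v = v := by
  induction hv using Subsemigroup.closure_induction with
  | mem v hv => exact ⟨v, hv, hs v hv⟩
  | mul v w _ _ ihv _ =>
    obtain ⟨e, he, hev⟩ := ihv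
    exact ⟨e, he, by rw [← mul_assoc, hev]⟩

lemma IsIdemGen.exists_mul_eq_self {α : Type*} {S : Set (Transf α)} (hS : IsIdemGen S)
    {a : Transf α} (ha : a ∈ S) : ∃ e ∈ S, e * a = a := by
  rw [hS] at ha
  obtain ⟨e, he, hea⟩ := exists_mul_eq_self_of_mem_closure (fun _ hu => hu.2) ha
  exact ⟨e, he.1, hea⟩

section GeneratedSemigroup

variable {α : Type*} {G : Subgroup (Equiv.Perm α)} {a : Transf α}

lemma self_mem_genGAminusG (ha : ¬ Function.Bijective a.toFun) : a ∈ genGAminusG G a := by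
  refine ⟨Subsemigroup.subset_closure (Set.mem_insert _ _), ?_⟩
  rintro ⟨g, -, rfl⟩
  exact ha g.bijective

lemma mem_image_ofPerm_or_range_subset_of_mem_genGA {u : Transf α} (hu : u ∈ genGA G a) :
    u ∈ Transf.ofPerm '' (G : Set (Equiv.Perm α)) ∨
      ∃ g ∈ G, Set.range u.toFun ⊆ g '' Set.range a.toFun := by
  induction hu using Subsemigroup.closure_induction with
  | mem u hu =>
    rcases hu with rfl | hu
    · exact Or.inr ⟨1, G.one_mem, (Set.image_id _).superset⟩
    · exact Or.inl hu
  | mul u v _ _ ihu ihv =>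
    rcases ihv with ⟨k, hk, rfl⟩ | ⟨g, hg, hv⟩
    · rcases ihu with ⟨l, hl, rfl⟩ | ⟨g, hg, hu⟩
      · exact Or.inl ⟨k * l, G.mul_mem hk hl, rfl⟩
      · refine Or.inr ⟨k * g, G.mul_mem hk hg, ?_⟩
        calc Set.range (k ∘ u.toFun) = k '' Set.range u.toFun := Set.range_comp _ _
          _ ⊆ k '' (g '' Set.range a.toFun) := Set.image_mono hu
          _ = (k ∘ g) '' Set.range a.toFun := (Set.image_comp _ _ _).symm
    · exact Or.inr ⟨g, hg, (Set.range_comp_subset_range u.toFun v.toFun).trans hv⟩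

lemma exists_range_subset_of_mem_genGAminusG {u : Transf α} (hu : u ∈ genGAminusG G a) :
    ∃ g ∈ G, Set.range u.toFun ⊆ g '' Set.range a.toFun :=
  (mem_image_ofPerm_or_range_subset_of_mem_genGA hu.1).resolve_left hu.2

end GeneratedSemigroup

section Kernel

variable {α : Type*} [DecidableEq α] [Fintype α]

lemma exists_range_eq_and_kernel_eq {I : Finset α} {P : Finpartition (univ : Finset α)}
    (hcard : #P.parts = #I) :
    ∃ a : Transf α, Set.range a.toFun = I ∧
      ∀ x y, a.toFun x = a.toFun y ↔ P.part x = P.part y := by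
  let toPart : α → P.parts := fun x => ⟨P.part x, P.part_mem.2 (mem_univ x)⟩
  have toPart_surjective : Function.Surjective toPart := by
    rintro ⟨p, hp⟩
    obtain ⟨x, -, hx⟩ := P.part_surjOn hp
    exact ⟨x, Subtype.ext hx⟩
  let φ : P.parts ≃ I := equivOfCardEq hcard
  refine ⟨⟨fun x => φ (toPart x)⟩, ?_, fun x y => ?_⟩
  · calc Set.range (Subtype.val ∘ (φ ∘ toPart)) = Set.range (Subtype.val : I → α) :=
          (φ.surjective.comp toPart_surjective).range_comp _
      _ = I := Subtype.range_coe
  · exact Subtype.coe_injective.eq_iff.trans (φ.injective.eq_iff.trans Subtype.ext_iff)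

lemma isTransversal_of_mul_eq_self {P : Finpartition (univ : Finset α)} {T : Finset α}
    {a e : Transf α} (hcard : #P.parts = #T)
    (hker : ∀ x y, a.toFun x = a.toFun y → P.part x = P.part y) (hea : e * a = a)
    (hrange : Set.range e.toFun ⊆ T) : IsTransversal T P := by
  refine isTransversal_of_inter_nonempty hcard fun p hp => ?_
  obtain ⟨x, -, hx⟩ := P.part_surjOn hp
  have haex : a.toFun (e.toFun x) = a.toFun x := congrFun (congrArg Transf.toFun hea) x
  have hpart : P.part (e.toFun x) = p := (hker _ _ haex).trans hx
  exact ⟨e.toFun x, mem_inter.2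
    ⟨hrange (Set.mem_range_self x), (P.part_eq_iff_mem hp).1 hpart⟩⟩

theorem stmt9_general (G : Subgroup (Equiv.Perm α))
    (h : ∀ a : Transf α, ¬ Function.Bijective a.toFun → ∃ e ∈ genGAminusG G a, e * a = a) :
    HasUTP G := by
  intro I P hcard
  obtain ⟨a, harange, hker⟩ := exists_range_eq_and_kernel_eq hcard
  obtain ⟨e, hea, g, hg, herange⟩ :
      ∃ e, e * a = a ∧ ∃ g ∈ G, Set.range e.toFun ⊆ g '' Set.range a.toFun := by
    by_cases ha : Function.Bijective a.toFun
    · exact ⟨Transf.ofPerm 1, rfl, 1, G.one_mem, by simp [ha.surjective.range_eq]⟩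
    · obtain ⟨e, he, hea⟩ := h a ha
      exact ⟨e, hea, exists_range_subset_of_mem_genGAminusG he⟩
  refine ⟨g, hg, isTransversal_of_mul_eq_self ?_ (fun x y => (hker x y).1) hea ?_⟩
  · rw [card_image_of_injective I g.injective, hcard]
  · rwa [coe_image, ← harange]

end Kernel

theorem stmt9 (n : ℕ) (hn : 1 ≤ n) (G : Subgroup (Equiv.Perm (Fin n)))
    (h : ∀ a : Transf (Fin n), ¬ Function.Bijective a.toFun →
      IsIdemGen (genGAminusG G a)) :
    HasUTP G := by
  exact stmt9_general G fun a ha => (h a ha).exists_mul_eq_self (self_mem_genGAminusG ha)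
end

section
/- Let n ≥ 1, let G be a subgroup of S_n, and let a ∈ T_n∖S_n be a singular transformation such that K_G(a) is empty (i.e. rank(aga) < rank(a) for every g ∈ G). Then every idempotent of the semigroup ⟨G,a⟩∖G has rank strictly less than rank(a), and a is not a regular element of ⟨G,a⟩∖G. -/
open Finset

/-!
An element of `⟨G, a⟩ ∖ G` is a product of generators in which `a` occurs. Stopping at its first,
respectively last, occurrence of `a` writes the element as `g a y`, respectively `x a h`, with
`g, h ∈ G`. If `u` is an idempotent, then `u = u u = (x a h) (g a y)` factors through `a (h g) a`;
if `a = a v a` with `v = g a y`, then `a` factors through `a g a`. A product through `a k a` with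
`k ∈ G` has rank below `rank a`, so the first case bounds `rank u` and the second is absurd.
-/

namespace Transf

variable {α : Type*} {G : Subgroup (Equiv.Perm α)} {a : Transf α}

theorem rank_mul_mul_le {b : Transf α} (hb : (Set.range b.toFun).Finite) (x y : Transf α) :
    rank (x * b * y) ≤ rank b := by
  have hsub : Set.range (x * b * y).toFun ⊆ y.toFun '' Set.range b.toFun := by
    rintro _ ⟨i, rfl⟩
    exact Set.mem_image_of_mem y.toFun (Set.mem_range_self (x.toFun i))
  exact (Set.ncard_le_ncard hsub (hb.image y.toFun)).trans (Set.ncard_image_le hb)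

theorem rank_mul_mul_lt {b : Transf α} (hb : rank (a * b * a) < rank a) (x y : Transf α) :
    rank (x * (a * b * a) * y) < rank a := by
  -- `Set.ncard` is `0` on infinite sets, so a positive rank forces a finite image.
  have ha : (Set.range a.toFun).Finite := Set.finite_of_ncard_pos (Nat.zero_lt_of_lt hb)
  have haba : (Set.range (a * b * a).toFun).Finite :=
    ha.subset (Set.range_comp_subset_range (a * b).toFun a.toFun)
  exact (rank_mul_mul_le haba x y).trans_lt hb

theorem exists_eq_ofPerm_mul_mul {u : Transf α} (hu : u ∈ genGAminusG G a) :
    ∃ g ∈ G, ∃ y, u = ofPerm g * a * y := by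
  suffices h_or : u ∈ ofPerm '' (G : Set (Equiv.Perm α)) ∨ ∃ g ∈ G, ∃ y, u = ofPerm g * a * y from
    h_or.resolve_left hu.2
  replace hu : u ∈ genGA G a := hu.1
  induction hu using Subsemigroup.closure_induction with
  | mem u hu =>
    rcases hu with rfl | hu
    · exact .inr ⟨1, G.one_mem, ofPerm 1, rfl⟩
    · exact .inl hu
  | mul u v _ _ hu hv =>
    rcases hu with ⟨g, hg, rfl⟩ | ⟨g, hg, y, rfl⟩
    · rcases hv with ⟨k, hk, rfl⟩ | ⟨k, hk, y, rfl⟩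
      -- `ofPerm` reverses products, as `Equiv.Perm` composes right-to-left.
      · exact .inl ⟨k * g, G.mul_mem hk hg, rfl⟩
      · exact .inr ⟨k * g, G.mul_mem hk hg, y, rfl⟩
    · exact .inr ⟨g, hg, y * v, rfl⟩

theorem exists_eq_mul_mul_ofPerm {u : Transf α} (hu : u ∈ genGAminusG G a) :
    ∃ x, ∃ h ∈ G, u = x * a * ofPerm h := by
  suffices h_or : u ∈ ofPerm '' (G : Set (Equiv.Perm α)) ∨ ∃ x, ∃ h ∈ G, u = x * a * ofPerm h from
    h_or.resolve_left hu.2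
  replace hu : u ∈ genGA G a := hu.1
  induction hu using Subsemigroup.closure_induction with
  | mem u hu =>
    rcases hu with rfl | hu
    · exact .inr ⟨ofPerm 1, 1, G.one_mem, rfl⟩
    · exact .inl hu
  | mul u v _ _ hu hv =>
    rcases hv with ⟨h, hh, rfl⟩ | ⟨x, h, hh, rfl⟩
    · rcases hu with ⟨k, hk, rfl⟩ | ⟨x, k, hk, rfl⟩
      · exact .inl ⟨h * k, G.mul_mem hh hk, rfl⟩
      · exact .inr ⟨x, h * k, G.mul_mem hh hk, rfl⟩
    · exact .inr ⟨u * x, h, hh, rfl⟩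

theorem rank_mul_lt_of_mem_genGAminusG (hK : ∀ g ∈ G, rank (a * ofPerm g * a) < rank a)
    {u v : Transf α} (hu : u ∈ genGAminusG G a) (hv : v ∈ genGAminusG G a) :
    rank (u * v) < rank a := by
  obtain ⟨x, h, hh, rfl⟩ := exists_eq_mul_mul_ofPerm hu
  obtain ⟨g, hg, y, rfl⟩ := exists_eq_ofPerm_mul_mul hv
  exact rank_mul_mul_lt (hK (g * h) (G.mul_mem hg hh)) x y

theorem rank_mul_mul_self_lt_of_mem_genGAminusG
    (hK : ∀ g ∈ G, rank (a * ofPerm g * a) < rank a)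
    {v : Transf α} (hv : v ∈ genGAminusG G a) : rank (a * v * a) < rank a := by
  obtain ⟨g, hg, y, rfl⟩ := exists_eq_ofPerm_mul_mul hv
  exact rank_mul_mul_lt (hK g hg) (ofPerm 1) (y * a)

end Transf

theorem stmt10_general {α : Type*} (G : Subgroup (Equiv.Perm α)) (a : Transf α)
    (hK : ∀ g ∈ G, Transf.rank (a * Transf.ofPerm g * a) < Transf.rank a) :
    (∀ u ∈ genGAminusG G a, u * u = u → Transf.rank u < Transf.rank a) ∧
    ¬ ∃ v ∈ genGAminusG G a, a * v * a = a := by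
  constructor
  · intro u hu huu
    simpa only [huu] using Transf.rank_mul_lt_of_mem_genGAminusG hK hu hu
  · rintro ⟨v, hv, hava⟩
    exact (Transf.rank_mul_mul_self_lt_of_mem_genGAminusG hK hv).ne (congrArg Transf.rank hava)

theorem stmt10 (n : ℕ) (hn : 1 ≤ n) (G : Subgroup (Equiv.Perm (Fin n)))
    (a : Transf (Fin n)) (ha : ¬ Function.Bijective a.toFun)
    (hK : ∀ g ∈ G, Transf.rank (a * Transf.ofPerm g * a) < Transf.rank a) :
    (∀ u ∈ genGAminusG G a, u * u = u → Transf.rank u < Transf.rank a) ∧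
    ¬ ∃ v ∈ genGAminusG G a, a * v * a = a :=
  stmt10_general G a hK
end

section
/- Let n ≥ 1, let G be a subgroup of S_n, and let a ∈ T_n∖S_n be a singular transformation. If the semigroup ⟨G,a⟩ is regular, then the semigroup ⟨G,a⟩∖G is regular. -/
/-!
A word in `G ∪ {a}` that involves `a` reads `g a s` and also `t a k`, up to the first and from the
last occurrence of `a`, with `g`, `k` products of permutations. If the word is bijective, the first
form makes `a` injective and the second makes it surjective. So for singular `a` the set
`⟨G, a⟩ ∖ G` consists of the singular elements of `⟨G, a⟩`.

If `u = u v u`, then `w = v u v` satisfies `u = u w u` too. Were `w` bijective, its outer factors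
would make `v` both injective and surjective, and `u` would be bijective. So a singular `u` has
the singular `w` as such a partner.
-/

open Finset

namespace Transf

variable {α : Type*}

theorem mul_mem_image_ofPerm {G : Subgroup (Equiv.Perm α)} {x y : Transf α}
    (hx : x ∈ ofPerm '' (G : Set (Equiv.Perm α))) (hy : y ∈ ofPerm '' (G : Set (Equiv.Perm α))) :
    x * y ∈ ofPerm '' (G : Set (Equiv.Perm α)) := by
  obtain ⟨g, hg, rfl⟩ := hx
  obtain ⟨k, hk, rfl⟩ := hy
  -- Permutations compose right-to-left, transformations left-to-right.
  exact ⟨k * g, G.mul_mem hk hg, rfl⟩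

theorem injective_left_of_mul {x y : Transf α} (h : Function.Injective (x * y).toFun) :
    Function.Injective x.toFun :=
  Function.Injective.of_comp (f := y.toFun) h

theorem surjective_right_of_mul {x y : Transf α} (h : Function.Surjective (x * y).toFun) :
    Function.Surjective y.toFun :=
  Function.Surjective.of_comp (g := x.toFun) h

theorem bijective_of_mul_mul_self {u v : Transf α} (h : Function.Bijective (v * u * v).toFun) :
    Function.Bijective u.toFun := by
  have hv : Function.Bijective v.toFun :=
    ⟨injective_left_of_mul (injective_left_of_mul h.injective),
      surjective_right_of_mul h.surjective⟩
  have hvu : Function.Bijective (u.toFun ∘ v.toFun) := (hv.of_comp_iff' _).mp h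
  exact (Function.Bijective.of_comp_iff _ hv).mp hvu

end Transf

section GenGA

variable {α : Type*} {G : Subgroup (Equiv.Perm α)} {a u : Transf α}

theorem injective_of_mem_genGAminusG (hu : u ∈ genGAminusG G a)
    (hinj : Function.Injective u.toFun) : Function.Injective a.toFun := by
  obtain ⟨hmem, huG⟩ := hu
  induction hmem using Subsemigroup.closure_induction with
  | mem x hx => exact hx.resolve_right huG ▸ hinj
  | mul x y _ _ ihx ihy =>
    by_cases hx : x ∈ Transf.ofPerm '' (G : Set (Equiv.Perm α))
    · have hy : y ∉ Transf.ofPerm '' (G : Set (Equiv.Perm α)) :=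
        fun hy => huG (Transf.mul_mem_image_ofPerm hx hy)
      obtain ⟨g, -, rfl⟩ := hx
      exact ihy ((g.injective_comp y.toFun).mp hinj) hy
    · exact ihx (Transf.injective_left_of_mul hinj) hx

theorem surjective_of_mem_genGAminusG (hu : u ∈ genGAminusG G a)
    (hsurj : Function.Surjective u.toFun) : Function.Surjective a.toFun := by
  obtain ⟨hmem, huG⟩ := hu
  induction hmem using Subsemigroup.closure_induction with
  | mem x hx => exact hx.resolve_right huG ▸ hsurj
  | mul x y _ _ ihx ihy =>
    by_cases hy : y ∈ Transf.ofPerm '' (G : Set (Equiv.Perm α))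
    · have hx : x ∉ Transf.ofPerm '' (G : Set (Equiv.Perm α)) :=
        fun hx => huG (Transf.mul_mem_image_ofPerm hx hy)
      obtain ⟨g, -, rfl⟩ := hy
      exact ihx ((g.comp_surjective x.toFun).mp hsurj) hx
    · exact ihy (Transf.surjective_right_of_mul hsurj) hy

theorem genGAminusG_eq_setOf_not_bijective (ha : ¬ Function.Bijective a.toFun) :
    genGAminusG G a = {u | u ∈ genGA G a ∧ ¬ Function.Bijective u.toFun} := by
  ext u
  constructor
  · exact fun hu => ⟨hu.1, fun hbij => ha ⟨injective_of_mem_genGAminusG hu hbij.injective,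
      surjective_of_mem_genGAminusG hu hbij.surjective⟩⟩
  · rintro ⟨hu, hsing⟩
    refine ⟨hu, ?_⟩
    rintro ⟨g, -, rfl⟩
    exact hsing g.bijective

end GenGA

theorem IsRegularSet.setOf_not_bijective {α : Type*} {S : Subsemigroup (Transf α)}
    (hS : IsRegularSet (S : Set (Transf α))) :
    IsRegularSet {u | u ∈ S ∧ ¬ Function.Bijective u.toFun} := by
  rintro u ⟨hu, hsing⟩
  obtain ⟨v, hv, huvu⟩ := hS u hu
  refine ⟨v * u * v, ⟨mul_mem (mul_mem hv hu) hv, mt Transf.bijective_of_mul_mul_self hsing⟩, ?_⟩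
  calc u * (v * u * v) * u = (u * v * u) * v * u := by simp only [mul_assoc]
    _ = u := by rw [huvu, huvu]

theorem stmt11_general {α : Type*} (G : Subgroup (Equiv.Perm α)) (a : Transf α)
    (ha : ¬ Function.Bijective a.toFun) (h : IsRegularSet (genGA G a : Set (Transf α))) :
    IsRegularSet (genGAminusG G a) := by
  rw [genGAminusG_eq_setOf_not_bijective ha]
  exact h.setOf_not_bijective

theorem stmt11 (n : ℕ) (hn : 1 ≤ n) (G : Subgroup (Equiv.Perm (Fin n)))
    (a : Transf (Fin n)) (ha : ¬ Function.Bijective a.toFun)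
    (h : IsRegularSet (genGA G a : Set (Transf (Fin n)))) :
    IsRegularSet (genGAminusG G a) :=
  stmt11_general G a ha h
end

section
/- Every subgroup G of S_n with the universal transversal property is synchronizing. -/
open Finset

/-- `G` is synchronizing: for every non-trivial partition `P` (with at least `2` and at
most `n - 1` classes) and every transversal `T` of `P`, some `G`-translate of `T` fails
to be a transversal for `P`. -/
def IsSynchronizing {α : Type*} [DecidableEq α] [Fintype α]
    (G : Subgroup (Equiv.Perm α)) : Prop :=
  ∀ P : Finpartition (Finset.univ : Finset α), 2 ≤ P.parts.card →
    P.parts.card ≤ Fintype.card α - 1 →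
    ∀ T : Finset α, IsTransversal T P → ∃ g ∈ G, ¬ IsTransversal (T.image ⇑g) P

/-!
Suppose all `G`-translates of a transversal `T` of `P` are transversals, where `P` has `k` classes
and `2 ≤ k < n`. Some class `p` contains two distinct points `a`, `b`.

If `k ≥ 3`, the universal transversal property applied to `T` and a partition with `k` classes in
which `{a}` and `{b}` are classes yields a translate of `T` containing both `a` and `b`. This
translate meets `p` twice, a contradiction.

If `k = 2`, write `T = {s, t}`; every `g ∈ G` sends exactly one of `s`, `t` into `p`. Given `g ∈ G`,
let `B` be the set of points `x` for which `x ∈ p ↔ g x ∈ p`. Every translate of `{s, t}` lies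
inside `B` or inside its complement, so by the universal transversal property for 2-sets `B` is
empty or everything; that is, `g` preserves or exchanges `p` and its complement. Hence no translate
of `{a, b}` is split by `p`, contradicting the same property.
-/

section

variable {α : Type*} [DecidableEq α]

theorem card_pair_inter_eq_one_iff {s t : α} (hst : s ≠ t) (A : Finset α) :
    #({s, t} ∩ A) = 1 ↔ (s ∈ A ↔ t ∉ A) := by
  by_cases hs : s ∈ A <;> by_cases ht : t ∈ A <;>
    simp [hs, ht, hst, insert_inter_of_mem, insert_inter_of_notMem]

theorem exists_one_lt_card_of_card_parts_lt {S : Finset α} (P : Finpartition S)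
    (hP : #P.parts < #S) : ∃ p ∈ P.parts, 1 < #p := by
  refine exists_lt_of_sum_lt ?_
  rwa [P.sum_card_parts, ← card_eq_sum_ones]

variable [Fintype α]

namespace IsTransversal

variable {T : Finset α} {P : Finpartition (univ : Finset α)}

theorem card_parts_eq (hT : IsTransversal T P) : #P.parts = #T :=
  calc
    #P.parts = ∑ p ∈ P.parts, #(p ∩ T) := by
      rw [card_eq_sum_ones]
      exact sum_congr rfl fun p hp ↦ by rw [inter_comm, hT p hp]
    _ = ∑ q ∈ (P.restrict (subset_univ T)).parts, #q :=
      (P.sum_restrict (subset_univ T) card card_empty).symm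
    _ = #T := (P.restrict (subset_univ T)).sum_card_parts

theorem eq_of_mem (hT : IsTransversal T P) {p : Finset α} (hp : p ∈ P.parts) {a b : α}
    (haT : a ∈ T) (hbT : b ∈ T) (ha : a ∈ p) (hb : b ∈ p) : a = b :=
  card_le_one.1 (hT p hp).le a (mem_inter.2 ⟨haT, ha⟩) b (mem_inter.2 ⟨hbT, hb⟩)

end IsTransversal

namespace HasUTP

variable {G : Subgroup (Equiv.Perm α)}

theorem exists_card_image_inter_eq_one (h : HasUTP G) {S I : Finset α} (hS : S ⊂ univ)
    (P : Finpartition S) (hI : #P.parts + 1 = #I) :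
    ∃ g ∈ G, ∀ p ∈ P.parts, #(I.image g ∩ p) = 1 := by
  let Q : Finpartition (univ : Finset α) :=
    P.extend (sdiff_nonempty.2 hS.2).ne_empty disjoint_sdiff (union_sdiff_of_subset hS.1)
  obtain ⟨g, hg, hgI⟩ := h I Q ((P.card_extend _ _).trans hI)
  exact ⟨g, hg, fun p hp ↦ hgI p (mem_insert_of_mem hp)⟩

theorem exists_subset_image (h : HasUTP G) {S T : Finset α} (hST : #S < #T) :
    ∃ g ∈ G, S ⊆ T.image g := by
  have hT : #T ≤ #(univ : Finset α) := card_le_univ T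
  obtain ⟨R, hSR, hR_subset, hR⟩ :=
    exists_subsuperset_card_eq (n := #T - 1) (subset_univ S) (by lia) (by lia)
  have hR_ssubset : R ⊂ univ := hR_subset.ssubset_of_ne fun hR_eq ↦ by rw [← hR_eq] at hT; lia
  obtain ⟨g, hg, hgT⟩ := h.exists_card_image_inter_eq_one (I := T) hR_ssubset ⊥
    (by rw [Finpartition.card_bot]; lia)
  refine ⟨g, hg, fun x hx ↦ ?_⟩
  have hx_inter : #(T.image g ∩ {x}) = 1 :=
    hgT {x} (Finpartition.mem_bot_iff.2 ⟨x, hSR hx, rfl⟩)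
  by_contra hxT
  rw [inter_singleton_of_notMem hxT, card_empty] at hx_inter
  exact zero_ne_one hx_inter

theorem exists_apply_mem_iff_apply_notMem (h : HasUTP G) {s t : α} (hst : s ≠ t) {A : Finset α}
    (hA : A.Nonempty) (hA_ssubset : A ⊂ univ) : ∃ g ∈ G, (g s ∈ A ↔ g t ∉ A) := by
  obtain ⟨g, hg, hgA⟩ := h.exists_card_image_inter_eq_one (I := {s, t}) hA_ssubset
    (.indiscrete hA.ne_empty) (by rw [card_pair hst, Finpartition.indiscrete_parts, card_singleton])
  have hgA_card : #({g s, g t} ∩ A) = 1 := by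
    simpa only [image_insert, image_singleton] using hgA A (mem_singleton_self A)
  exact ⟨g, hg, (card_pair_inter_eq_one_iff (g.injective.ne hst) A).1 hgA_card⟩

theorem apply_mem_iff_apply_mem (h : HasUTP G) {s t : α} {A : Finset α}
    (hsplit : ∀ g ∈ G, (g s ∈ A ↔ g t ∉ A)) {g : Equiv.Perm α} (hg : g ∈ G) (x y : α) :
    (g x ∈ A ↔ g y ∈ A) ↔ (x ∈ A ↔ y ∈ A) := by
  let B : Finset α := {z | z ∈ A ↔ g z ∈ A}
  have hB (z : α) : z ∈ B ↔ (z ∈ A ↔ g z ∈ A) := mem_filter_univ z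
  have hst : s ≠ t := by
    rintro rfl
    exact iff_not_self (hsplit 1 G.one_mem)
  have hB_not_split (k : Equiv.Perm α) (hk : k ∈ G) : k s ∈ B ↔ k t ∈ B := by
    have hk_split : k s ∈ A ↔ k t ∉ A := hsplit k hk
    have hgk_split : g (k s) ∈ A ↔ g (k t) ∉ A := hsplit (g * k) (G.mul_mem hg hk)
    rw [hB, hB, hk_split, hgk_split, not_iff_not]
  have hB_trivial : B = ∅ ∨ B = univ := by
    by_contra! hB_proper
    obtain ⟨k, hk, hk_split⟩ := h.exists_apply_mem_iff_apply_notMem hst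
      hB_proper.1 (ssubset_univ_iff.2 hB_proper.2)
    exact iff_not_self ((hB_not_split k hk).symm.trans hk_split)
  have hxy : x ∈ B ↔ y ∈ B := by
    rcases hB_trivial with hB_empty | hB_univ
    · simp only [hB_empty, notMem_empty]
    · simp only [hB_univ, mem_univ]
  rw [hB, hB] at hxy
  tauto

theorem card_le_one_of_forall_apply_mem_iff_apply_notMem (h : HasUTP G) {s t : α} {A : Finset α}
    (hsplit : ∀ g ∈ G, (g s ∈ A ↔ g t ∉ A)) : #A ≤ 1 := by
  have hA_ssubset : A ⊂ univ := by
    refine ssubset_univ_iff.2 fun hA ↦ ?_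
    simpa [hA] using hsplit 1 G.one_mem
  refine card_le_one.2 fun a ha b hb ↦ ?_
  by_contra hab
  obtain ⟨g, hg, hg_split⟩ := h.exists_apply_mem_iff_apply_notMem hab ⟨a, ha⟩ hA_ssubset
  have hg_iff : g a ∈ A ↔ g b ∈ A :=
    (h.apply_mem_iff_apply_mem hsplit hg a b).2 (iff_of_true ha hb)
  exact iff_not_self (hg_iff.symm.trans hg_split)

end HasUTP

end

theorem stmt12_general {α : Type*} [DecidableEq α] [Fintype α] {G : Subgroup (Equiv.Perm α)}
    (h : HasUTP G) : IsSynchronizing G := by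
  intro P hP_two hP_card T hT
  by_contra! htranslate
  have hTP : #P.parts = #T := hT.card_parts_eq
  obtain ⟨p, hp, hp_card⟩ := exists_one_lt_card_of_card_parts_lt P (by rw [card_univ]; lia)
  rcases (hTP ▸ hP_two).eq_or_lt with hT_two | hT_three
  · obtain ⟨s, t, hst, rfl⟩ := card_eq_two.1 hT_two.symm
    have hsplit (g : Equiv.Perm α) (hg : g ∈ G) : g s ∈ p ↔ g t ∉ p := by
      rw [← card_pair_inter_eq_one_iff (g.injective.ne hst)]
      simpa only [image_insert, image_singleton] using htranslate g hg p hp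
    exact hp_card.not_ge (h.card_le_one_of_forall_apply_mem_iff_apply_notMem hsplit)
  · obtain ⟨a, ha, b, hb, hab⟩ := one_lt_card.1 hp_card
    obtain ⟨g, hg, habT⟩ := h.exists_subset_image (S := {a, b}) (card_pair hab ▸ hT_three)
    obtain ⟨haT, hbT⟩ := insert_subset_iff.1 habT
    exact hab ((htranslate g hg).eq_of_mem hp haT (singleton_subset_iff.1 hbT) ha hb)

theorem stmt12 (n : ℕ) (G : Subgroup (Equiv.Perm (Fin n))) (h : HasUTP G) :
    IsSynchronizing G :=
  stmt12_general h
end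

section
/- Let n ≥ 1 and let G be a subgroup of S_n with the universal transversal property. Then for every integer r with 1 ≤ r ≤ n−1, the inequality |G|·(r+1) ≥ C(n,r) holds, where C(n,r) is the binomial coefficient. -/
/-!
An `(r+1)`-set `J` being fixed, every `r`-set `I` lies in some translate of `J`: a translate that is
a transversal of the partition into the singletons of `I` and the complement of `I` must contain
`I`. There are at most `|G|` translates of `J`, and each contains `r + 1` subsets of size `r`.
-/

open Finset

open scoped Pointwise

/-- The action of `G` on `α` is `(k, l)`-homogeneous: every `k`-subset of `α` can be moved into
every `l`-subset. For a group action, the inclusion `I ⊆ g • J` used here says that `g⁻¹` moves `I`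
into `J`. -/
def IsSetHomogeneous (G α : Type*) [SMul G α] [DecidableEq α] (k l : ℕ) : Prop :=
  ∀ I J : Finset α, I.card = k → J.card = l → ∃ g : G, I ⊆ g • J

/-- The `k`-universal transversal property (`k`-ut): the universal transversal property restricted
to subsets of size `k` and partitions into `k` classes. -/
def HasKUT {α : Type*} [DecidableEq α] [Fintype α] (G : Subgroup (Equiv.Perm α)) (k : ℕ) : Prop :=
  ∀ (I : Finset α) (P : Finpartition (univ : Finset α)),
    I.card = k → P.parts.card = k → ∃ g ∈ G, IsTransversal (I.image ⇑g) P

theorem choose_card_le_card_mul_choose_of_cover {α ι : Type*} {V : Finset α} {s : Finset ι}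
    {B : ι → Finset α} {k l : ℕ} (hB : ∀ i ∈ s, (B i).card ≤ l)
    (hcover : ∀ I ⊆ V, I.card = k → ∃ i ∈ s, I ⊆ B i) :
    V.card.choose k ≤ s.card * l.choose k := by
  classical
  have hsub : powersetCard k V ⊆ s.biUnion fun i => powersetCard k (B i) := by
    intro I hI
    obtain ⟨hIV, hIk⟩ := mem_powersetCard.1 hI
    obtain ⟨i, hi, hIi⟩ := hcover I hIV hIk
    exact mem_biUnion.2 ⟨i, hi, mem_powersetCard.2 ⟨hIi, hIk⟩⟩
  calc V.card.choose k = (powersetCard k V).card := (card_powersetCard k V).symm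
    _ ≤ (s.biUnion fun i => powersetCard k (B i)).card := card_le_card hsub
    _ ≤ s.card * l.choose k := card_biUnion_le_card_mul _ _ _ fun i hi => by
      rw [card_powersetCard]
      exact Nat.choose_le_choose k (hB i hi)

section Transversal

variable {α : Type*} [DecidableEq α] [Fintype α]

theorem IsTransversal.mem_of_singleton_mem_parts {T : Finset α}
    {P : Finpartition (univ : Finset α)} (hT : IsTransversal T P) {x : α} (hx : {x} ∈ P.parts) :
    x ∈ T := by
  by_contra hxT
  have hcard := hT {x} hx
  rw [inter_singleton_of_notMem hxT, card_empty] at hcard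
  exact zero_ne_one hcard

theorem HasUTP.hasKUT {G : Subgroup (Equiv.Perm α)} (hG : HasUTP G) (k : ℕ) : HasKUT G k :=
  fun I P hI hP => hG I P (hP.trans hI.symm)

theorem HasKUT.isSetHomogeneous {G : Subgroup (Equiv.Perm α)} {k : ℕ} (hG : HasKUT G (k + 1)) :
    IsSetHomogeneous G α k (k + 1) := by
  intro I J hI hJ
  have hcompl : Iᶜ ≠ ⊥ := by
    rw [bot_eq_empty, ← nonempty_iff_ne_empty, ← card_pos, card_compl]
    have := card_le_univ J
    lia
  let P : Finpartition (univ : Finset α) :=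
    (⊥ : Finpartition I).extend hcompl disjoint_compl_right (union_compl I)
  have hP : P.parts.card = k + 1 := by
    rw [Finpartition.card_extend, Finpartition.card_bot, hI]
  have hsingleton : ∀ x ∈ I, {x} ∈ P.parts := fun x hx =>
    mem_insert_of_mem (Finpartition.mem_bot_iff.2 ⟨x, hx, rfl⟩)
  obtain ⟨g, hg, hT⟩ := hG J P hJ hP
  exact ⟨⟨g, hg⟩, fun x hx => hT.mem_of_singleton_mem_parts (hsingleton x hx)⟩

end Transversal

theorem stmt14_general {G α : Type*} [SMul G α] [Finite G] [DecidableEq α] [Fintype α] {k l : ℕ}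
    (hG : IsSetHomogeneous G α k l) (hl : l ≤ Fintype.card α) :
    (Fintype.card α).choose k ≤ Nat.card G * l.choose k := by
  have := Fintype.ofFinite G
  obtain ⟨J, -, hJ⟩ := exists_subset_card_eq (s := (univ : Finset α)) hl
  rw [← card_univ, Nat.card_eq_fintype_card, ← card_univ (α := G)]
  refine choose_card_le_card_mul_choose_of_cover (B := fun g : G => g • J)
    (fun g _ => card_smul_finset_le.trans hJ.le) fun I _ hI => ?_
  obtain ⟨g, hg⟩ := hG I J hI hJ
  exact ⟨g, mem_univ g, hg⟩

theorem stmt14 (n : ℕ) (hn : 1 ≤ n) (G : Subgroup (Equiv.Perm (Fin n)))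
    (h : HasUTP G) (r : ℕ) (hr1 : 1 ≤ r) (hr2 : r ≤ n - 1) :
    Nat.card G * (r + 1) ≥ n.choose r := by
  have hcard : r + 1 ≤ Fintype.card (Fin n) := by rw [Fintype.card_fin]; lia
  simpa using stmt14_general (h.hasKUT (r + 1)).isSetHomogeneous hcard
end
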